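/- Let k ∈ ℕ, let P ⊂ ℝ^k be a polytope with rational vertices, and let m ∈ ℕ be such that mP is a lattice polytope. If n ∈ ℕ satisfies n ≥ mk and n ≡ r (mod m) with r ∈ {0,1,…,m−1}, then nP ∩ ℤ^k = ((n−mk−r)/m)*(mP ∩ ℤ^k) + ((mk+r)P ∩ ℤ^k), where the sumset operations are taken in (ℤ^k, +). -/

import Mathlib

open Pointwise

/-- The `n`-fold sumset `n*A` in the additive group `ℤ^k`, with `0*A = {0}`. -/
def iterSumset {G : Type*} [AddCommMonoid G] : ℕ → Set G → Set G
  | 0, _ => {0}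
  | n + 1, A => iterSumset n A + A

/-! By Carathéodory's theorem a point of a `d`-dimensional convex hull `P = conv S` is a convex
combination of at most `d + 1` points of `S`, so one of them has weight at least `1 / (d + 1)`.
Splitting it off gives `(d + 1)P = S + dP`, and hence `(m + t)P = mS + tP` for `t ≥ md`. If `mS`
consists of lattice points, then subtracting the `mS` component of a lattice point of `(m + t)P`
leaves a lattice point of `tP`; iterating this peels off copies of `mP ∩ ℤ^k`. -/

theorem preimage_add_of_subset_range {G H : Type*} [AddGroup G] [AddMonoid H] (f : G →+ H)
    {A B : Set H} (hA : A ⊆ Set.range f) : f ⁻¹' (A + B) = f ⁻¹' A + f ⁻¹' B := by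
  refine Set.Subset.antisymm ?_ (Set.preimage_add_preimage_subset f)
  rintro g ⟨a, ha, b, hb, hab⟩
  obtain ⟨u, rfl⟩ := hA ha
  have hfu : f (-u + g) = b := by
    rw [map_add, ← hab, ← add_assoc, ← map_add, neg_add_cancel, map_zero, zero_add]
  exact ⟨u, ha, -u + g, by rwa [Set.mem_preimage, hfu], add_neg_cancel_left u g⟩

theorem card_le_of_affineIndependent_of_rank_vectorSpan_le {𝕜 E ι : Type*} [DivisionRing 𝕜]
    [AddCommGroup E] [Module 𝕜 E] [Fintype ι] {S : Set E} {d : ℕ} {z : ι → E}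
    (hz : AffineIndependent 𝕜 z) (hzS : Set.range z ⊆ S)
    (hd : Module.rank 𝕜 (vectorSpan 𝕜 S) ≤ d) : Fintype.card ι ≤ d + 1 :=
  hz.card_le_finrank_succ.trans <| Nat.add_le_add_right (Module.finrank_le_of_rank_le <|
    (Submodule.rank_mono (vectorSpan_mono 𝕜 hzS)).trans hd) 1

theorem exists_one_le_mul_of_sum_eq_one {R ι : Type*} [Semiring R] [LinearOrder R]
    [IsStrictOrderedRing R] [Fintype ι] {w : ι → R}
    (hsum : ∑ i, w i = 1) {N : R} (hN : (Fintype.card ι : R) ≤ N) : ∃ j, 1 ≤ N * w j := by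
  have hne : (Finset.univ : Finset ι).Nonempty :=
    Finset.nonempty_of_sum_ne_zero (hsum.trans_ne one_ne_zero)
  have hle : ∑ _i : ι, (1 : R) ≤ ∑ i, N * w i := by
    simpa [← Finset.mul_sum, hsum] using hN
  obtain ⟨j, -, hj⟩ := Finset.exists_le_of_sum_le hne hle
  exact ⟨j, hj⟩

section ConvexHull

variable {𝕜 E : Type*} [Field 𝕜] [LinearOrder 𝕜] [IsStrictOrderedRing 𝕜]
  [AddCommGroup E] [Module 𝕜 E] {S : Set E} {d : ℕ}

theorem sum_smul_mem_sum_smul_of_convex {ι : Type*} (hS : Convex 𝕜 S) (hne : S.Nonempty)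
    {I : Finset ι} {c : ι → 𝕜} {z : ι → E} (hc : ∀ i ∈ I, 0 ≤ c i) (hz : ∀ i ∈ I, z i ∈ S) :
    ∑ i ∈ I, c i • z i ∈ (∑ i ∈ I, c i) • S := by
  induction I using Finset.cons_induction with
  | empty => simp [Set.zero_smul_set hne]
  | cons j J hj ih =>
    rw [Finset.forall_mem_cons] at hc hz
    rw [Finset.sum_cons, Finset.sum_cons, hS.add_smul hc.1 (Finset.sum_nonneg hc.2)]
    exact Set.add_mem_add (Set.smul_mem_smul_set hz.1) (ih hc.2 hz.2)

theorem one_add_smul_convexHull (hd : Module.rank 𝕜 (vectorSpan 𝕜 S) ≤ d) :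
    (1 + d : 𝕜) • convexHull 𝕜 S = S + (d : 𝕜) • convexHull 𝕜 S := by
  classical
  have hconv := convex_convexHull 𝕜 S
  apply Set.Subset.antisymm
  · rintro _ ⟨x, hx, rfl⟩
    obtain ⟨ι, _, z, w, hzS, hind, hw, hsum, rfl⟩ := eq_pos_convex_span_of_mem_convexHull hx
    have hcard : (Fintype.card ι : 𝕜) ≤ 1 + d := by
      rw [add_comm]
      exact_mod_cast card_le_of_affineIndependent_of_rank_vectorSpan_le hind hzS hd
    obtain ⟨j, hj⟩ := exists_one_le_mul_of_sum_eq_one hsum hcard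
    let c : ι → 𝕜 := fun i ↦ (1 + d) * w i - if i = j then 1 else 0
    have hc : ∀ i, 0 ≤ c i := by
      intro i
      obtain rfl | hij := eq_or_ne i j
      · simpa [c] using hj
      · simpa [c, hij] using mul_nonneg (by positivity) (hw i).le
    have hcsum : ∑ i, c i = d := by
      simp [c, Finset.sum_sub_distrib, ← Finset.mul_sum, hsum]
    have hsplit : z j + ∑ i, c i • z i = (1 + d : 𝕜) • ∑ i, w i • z i := by
      simp [c, sub_smul, Finset.sum_sub_distrib, mul_smul, ← Finset.smul_sum]
    have hrest : ∑ i, c i • z i ∈ (d : 𝕜) • convexHull 𝕜 S := hcsum ▸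
      sum_smul_mem_sum_smul_of_convex hconv ⟨_, hx⟩ (fun i _ ↦ hc i)
        fun i _ ↦ subset_convexHull 𝕜 S (hzS ⟨i, rfl⟩)
    exact ⟨z j, hzS ⟨j, rfl⟩, _, hrest, hsplit⟩
  · rw [hconv.add_smul zero_le_one d.cast_nonneg, one_smul]
    exact Set.add_subset_add_right (subset_convexHull 𝕜 S)

theorem add_smul_convexHull (hd : Module.rank 𝕜 (vectorSpan 𝕜 S) ≤ d) {m t : 𝕜} (hm : 0 ≤ m)
    (ht : m * d ≤ t) :
    (m + t) • convexHull 𝕜 S = m • S + t • convexHull 𝕜 S := by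
  have hconv := convex_convexHull 𝕜 S
  have hmd : 0 ≤ m * d := by positivity
  have htmd : 0 ≤ t - m * d := sub_nonneg.2 ht
  calc (m + t) • convexHull 𝕜 S
      = (m * (1 + d) + (t - m * d)) • convexHull 𝕜 S := by ring_nf
    _ = m • (1 + d : 𝕜) • convexHull 𝕜 S + (t - m * d) • convexHull 𝕜 S := by
        rw [hconv.add_smul (by positivity) htmd, mul_smul]
    _ = m • S + ((m * d) • convexHull 𝕜 S + (t - m * d) • convexHull 𝕜 S) := by
        rw [one_add_smul_convexHull hd, smul_add, mul_smul, add_assoc]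
    _ = m • S + t • convexHull 𝕜 S := by
        rw [← hconv.add_smul hmd htmd, add_sub_cancel]

variable {G : Type*} [AddCommGroup G] (f : G →+ E)

theorem preimage_add_smul_convexHull (hd : Module.rank 𝕜 (vectorSpan 𝕜 S) ≤ d) {m t : 𝕜}
    (hm : 0 ≤ m) (hmS : m • S ⊆ Set.range f) (ht : m * d ≤ t) :
    f ⁻¹' ((m + t) • convexHull 𝕜 S) =
      f ⁻¹' (m • convexHull 𝕜 S) + f ⁻¹' (t • convexHull 𝕜 S) := by
  apply Set.Subset.antisymm
  · rw [add_smul_convexHull hd hm ht, preimage_add_of_subset_range f hmS]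
    gcongr
    exact subset_convexHull 𝕜 S
  · have ht₀ : 0 ≤ t := le_trans (by positivity) ht
    rw [(convex_convexHull 𝕜 S).add_smul hm ht₀]
    exact Set.preimage_add_preimage_subset f

theorem preimage_mul_add_smul_convexHull (hd : Module.rank 𝕜 (vectorSpan 𝕜 S) ≤ d) {m t : 𝕜}
    (hm : 0 ≤ m) (hmS : m • S ⊆ Set.range f) (ht : m * d ≤ t) (q : ℕ) :
    f ⁻¹' ((q * m + t) • convexHull 𝕜 S) =
      iterSumset q (f ⁻¹' (m • convexHull 𝕜 S)) + f ⁻¹' (t • convexHull 𝕜 S) := by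
  induction q generalizing t with
  | zero => simp [iterSumset]
  | succ q ih =>
    have hq : ((q + 1 : ℕ) * m + t : 𝕜) = q * m + (m + t) := by push_cast; ring
    rw [hq, ih (ht.trans (le_add_of_nonneg_left hm)), preimage_add_smul_convexHull f hd hm hmS ht,
      iterSumset, add_assoc]

theorem dilated_rational_polytope_lattice_points_decomposition_general
    (hd : Module.rank 𝕜 (vectorSpan 𝕜 S) ≤ d) {m : ℕ} (hm : 0 < m)
    (hmS : (m : 𝕜) • S ⊆ Set.range f) {n : ℕ} (hn : m * d ≤ n) :
    f ⁻¹' ((n : 𝕜) • convexHull 𝕜 S) =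
      iterSumset ((n - m * d - n % m) / m) (f ⁻¹' ((m : 𝕜) • convexHull 𝕜 S)) +
        f ⁻¹' (((m * d + n % m : ℕ) : 𝕜) • convexHull 𝕜 S) := by
  obtain ⟨q, hq⟩ : ∃ q, n / m = d + q :=
    Nat.exists_eq_add_of_le ((Nat.le_div_iff_mul_le hm).2 (by rwa [mul_comm]))
  have hn_eq : n = q * m + (m * d + n % m) := by
    conv_lhs => rw [← Nat.div_add_mod n m, hq]
    ring
  have hq_eq : (n - m * d - n % m) / m = q := by
    rw [show n - m * d - n % m = q * m by omega, Nat.mul_div_cancel q hm]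
  have hcast : (n : 𝕜) = q * m + ((m * d + n % m : ℕ) : 𝕜) := by exact_mod_cast hn_eq
  rw [hq_eq, hcast]
  exact preimage_mul_add_smul_convexHull f hd m.cast_nonneg hmS (mod_cast Nat.le_add_right _ _) q

end ConvexHull

theorem smul_subset_range_compLeft_intCast {R ι : Type*} [Ring R] {V : Set (ι → R)}
    {c : R} (hV : ∀ v ∈ V, ∀ i, ∃ z : ℤ, c * v i = z) :
    c • V ⊆ Set.range ((Int.castAddHom R).compLeft ι) := by
  rintro _ ⟨v, hv, rfl⟩
  choose z hz using hV v hv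
  exact ⟨z, funext fun i ↦ (hz i).symm⟩

/-- geometric lemma, rational case. Let `k ∈ ℕ`, `k ≥ 1`, let
`P ⊂ ℝ^k` be a polytope with rational vertices (the convex hull of a nonempty finite
set `V` of points with rational coordinates), and let `m ∈ ℕ` be such that `mP` is a
lattice polytope. If `n ∈ ℕ` satisfies `n ≥ mk` and `n ≡ r (mod m)` with
`r = n % m ∈ {0,…,m−1}`, then
`nP ∩ ℤ^k = ((n−mk−r)/m)*(mP ∩ ℤ^k) + ((mk+r)P ∩ ℤ^k)` as subsets of `(ℤ^k, +)`. -/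
theorem dilated_rational_polytope_lattice_points_decomposition
    {k : ℕ} (hk : 0 < k) (V : Finset (Fin k → ℝ)) (hVne : V.Nonempty)
    (hV : ∀ v ∈ V, ∀ i, ∃ q : ℚ, v i = (q : ℝ))
    (m : ℕ) (hm : 0 < m)
    (hmV : ∀ v ∈ V, ∀ i, ∃ z : ℤ, (m : ℝ) * v i = (z : ℝ)) :
    ∀ n : ℕ, m * k ≤ n →
      {a : Fin k → ℤ |
          (fun i => (a i : ℝ)) ∈ (n : ℝ) • convexHull ℝ (V : Set (Fin k → ℝ))} =
        iterSumset ((n - m * k - n % m) / m)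
            {a : Fin k → ℤ |
              (fun i => (a i : ℝ)) ∈ (m : ℝ) • convexHull ℝ (V : Set (Fin k → ℝ))} +
          {a : Fin k → ℤ |
            (fun i => (a i : ℝ)) ∈
              ((m * k + n % m : ℕ) : ℝ) • convexHull ℝ (V : Set (Fin k → ℝ))} :=
  fun _ ↦ dilated_rational_polytope_lattice_points_decomposition_general _
    ((Submodule.rank_le _).trans_eq (rank_fin_fun k)) hm (smul_subset_range_compLeft_intCast hmV)
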